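/- For a ∈ ℝ/ℤ with representative [a] ∈ ℝ, let σ_a ∈ PSL₂(ℝ) be the class of the rotation matrix with entries (cos [a]π, -sin [a]π; sin [a]π, cos [a]π), and let C_a be its conjugacy class (these do not depend on the representative). Then the map ℚ/ℤ → PSL₂(ℝ)^Tor/~ sending a to C_a is a bijection, where PSL₂(ℝ)^Tor is the set of elements of finite order in PSL₂(ℝ) and PSL₂(ℝ)^Tor/~ is its set of conjugacy classes. Moreover, for every integer n and a ∈ ℚ/ℤ, one has n·a = 0 in ℚ/ℤ if and only if C_a^n = {1}. -/

import Mathlib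

/-!
The rotations form a one-parameter group whose image in `PSL₂(ℝ)` has kernel exactly `ℤ`
(`rotPSL_add`, `rotPSL_eq_one_iff`); this gives well-definedness and the torsion criterion.

Injectivity (`exists_int_of_isConj`): for `g ∈ SL₂(ℝ)` and a rotation `R` with angle `θ`, the trace of `g R g⁻¹` is
`2 cos θ`, and its lower-left minus upper-right entry is `sin θ` times the sum of the squares of
the entries of `g`, a positive number. Hence if `g R g⁻¹ = ε R'` with `ε = ±1`, the pairs
`(cos, sin)` of the two rotations agree up to the sign `ε`, and the angles differ by a multiple
of `π`.

Surjectivity: a finite-order `A ∈ SL₂(ℝ)` preserves the positive definite form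
`∑ (Aᵏ)ᵀ Aᵏ` (`exists_invariant_posDef`). The Cholesky factor of that form, scaled to determinant one, conjugates `A` into
`SO(2)`, that is, to a rotation (`exists_conj_rotSL`); that rotation has finite order in `PSL₂(ℝ)`, so its angle is a
rational multiple of `π`.
-/

open scoped MatrixGroups

/-- The rotation matrix `(cos aπ, -sin aπ; sin aπ, cos aπ)` as an element of `SL₂(ℝ)`. -/
noncomputable def rotSL (a : ℝ) : Matrix.SpecialLinearGroup (Fin 2) ℝ :=
  ⟨!![Real.cos (a * Real.pi), -Real.sin (a * Real.pi);
      Real.sin (a * Real.pi), Real.cos (a * Real.pi)], by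
    rw [Matrix.det_fin_two_of]
    linear_combination Real.sin_sq_add_cos_sq (a * Real.pi)⟩

/-- `σ_a ∈ PSL₂(ℝ)`: the class of the rotation matrix with angle `aπ`. -/
noncomputable def rotPSL (a : ℝ) : PSL(2, ℝ) := QuotientGroup.mk (rotSL a)

open scoped Matrix

theorem rotSL_add (a b : ℝ) : rotSL (a + b) = rotSL a * rotSL b := by
  ext i j
  fin_cases i <;> fin_cases j <;>
    rw [Matrix.SpecialLinearGroup.coe_mul] <;>
    simp [rotSL, Matrix.mul_apply, Fin.sum_univ_two, add_mul, Real.cos_add, Real.sin_add] <;> ring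

theorem rotPSL_add (a b : ℝ) : rotPSL (a + b) = rotPSL a * rotPSL b := by
  simp only [rotPSL, rotSL_add, QuotientGroup.mk_mul]

theorem rotPSL_zsmul (n : ℤ) (a : ℝ) : rotPSL (n * a) = rotPSL a ^ n := by
  have h := map_zpow (MonoidHom.mk' (fun x : Multiplicative ℝ => rotPSL x.toAdd)
    (fun x y => rotPSL_add _ _)) (Multiplicative.ofAdd a) n
  simpa [MonoidHom.mk'] using h

theorem mk_eq_one_iff (A : Matrix.SpecialLinearGroup (Fin 2) ℝ) :
    (QuotientGroup.mk A : PSL(2, ℝ)) = 1 ↔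
      ∃ r : ℝ, r ^ 2 = 1 ∧ (A : Matrix (Fin 2) (Fin 2) ℝ) = !![r, 0; 0, r] := by
  rw [QuotientGroup.eq_one_iff, Matrix.SpecialLinearGroup.mem_center_iff]
  refine exists_congr fun r => and_congr (by simp) ?_
  rw [eq_comm]
  refine Eq.congr_right ?_
  ext i j
  fin_cases i <;> fin_cases j <;> simp

theorem rotPSL_eq_one_iff (a : ℝ) : rotPSL a = 1 ↔ ∃ k : ℤ, (k : ℝ) = a := by
  rw [rotPSL, mk_eq_one_iff]
  constructor
  · rintro ⟨r, -, h⟩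
    have h10 := congrFun (congrFun h 1) 0
    simp only [rotSL, Matrix.of_apply, Matrix.cons_val] at h10
    obtain ⟨k, hk⟩ := Real.sin_eq_zero_iff.1 h10
    exact ⟨k, mul_right_cancel₀ Real.pi_ne_zero hk⟩
  · rintro ⟨k, rfl⟩
    refine ⟨Real.cos (k * Real.pi), ?_, ?_⟩
    · have := Real.sin_sq_add_cos_sq (k * Real.pi)
      rw [Real.sin_int_mul_pi] at this
      linarith
    · simp [rotSL, Real.sin_int_mul_pi]

theorem rotPSL_eq_of_sub {a b : ℝ} {k : ℤ} (h : (k : ℝ) = a - b) : rotPSL a = rotPSL b := by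
  have h1 : rotPSL k = 1 := (rotPSL_eq_one_iff _).2 ⟨k, rfl⟩
  rw [show a = k + b by linarith, rotPSL_add, h1, one_mul]

/-- Conjugate rotations in `PSL₂(ℝ)` have angles differing by a multiple of `π`. -/
theorem exists_int_of_isConj {a b : ℝ} (h : IsConj (rotPSL a) (rotPSL b)) :
    ∃ k : ℤ, (k : ℝ) = a - b := by
  obtain ⟨x, hx⟩ := isConj_iff.1 h
  obtain ⟨g, rfl⟩ := QuotientGroup.mk_surjective x
  have h1 : (QuotientGroup.mk ((rotSL b)⁻¹ * (g * rotSL a * g⁻¹)) : PSL(2, ℝ)) = 1 := by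
    rw [QuotientGroup.mk_mul, QuotientGroup.mk_mul, QuotientGroup.mk_mul, QuotientGroup.mk_inv,
      QuotientGroup.mk_inv]
    exact inv_mul_eq_one.2 hx.symm
  obtain ⟨r, hr, hm⟩ := (mk_eq_one_iff _).1 h1
  have h2 : ((g * rotSL a * g⁻¹ : Matrix.SpecialLinearGroup (Fin 2) ℝ) : Matrix (Fin 2) (Fin 2) ℝ) =
      (rotSL b : Matrix (Fin 2) (Fin 2) ℝ) * !![r, 0; 0, r] := by
    rw [← hm, ← Matrix.SpecialLinearGroup.coe_mul, mul_inv_cancel_left]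
  have hg := g.det_coe
  rw [Matrix.det_fin_two] at hg
  have h00 := congrFun (congrFun h2 0) 0
  have h01 := congrFun (congrFun h2 0) 1
  have h10 := congrFun (congrFun h2 1) 0
  have h11 := congrFun (congrFun h2 1) 1
  simp only [Matrix.SpecialLinearGroup.coe_mul] at h00 h01 h10 h11
  simp [rotSL, Matrix.mul_apply, Fin.sum_univ_two, Matrix.adjugate_fin_two]
    at h00 h01 h10 h11
  have hsa := Real.sin_sq_add_cos_sq (a * Real.pi)
  have hsb := Real.sin_sq_add_cos_sq (b * Real.pi)
  have hsub := Real.sin_sub (a * Real.pi) (b * Real.pi)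
  generalize Real.sin (a * Real.pi) = s at *
  generalize Real.cos (a * Real.pi) = c at *
  generalize Real.sin (b * Real.pi) = s' at *
  generalize Real.cos (b * Real.pi) = c' at *
  generalize (g : Matrix (Fin 2) (Fin 2) ℝ) 0 0 = p at *
  generalize (g : Matrix (Fin 2) (Fin 2) ℝ) 0 1 = q at *
  generalize (g : Matrix (Fin 2) (Fin 2) ℝ) 1 0 = u at *
  generalize (g : Matrix (Fin 2) (Fin 2) ℝ) 1 1 = v at *
  have hc : c = r * c' := by
    linear_combination (h00 + h11) / 2 - c * hg
  have hN : s * (p ^ 2 + q ^ 2 + u ^ 2 + v ^ 2) = 2 * (r * s') := by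
    linear_combination h10 - h01
  have hss : (s - r * s') * (s + r * s') = 0 := by
    subst hc
    linear_combination hsa - r ^ 2 * hsb - hr
  have hs : s = r * s' := by
    rcases mul_eq_zero.1 hss with h | h
    · linarith
    · have h0 : s * (p ^ 2 + q ^ 2 + u ^ 2 + v ^ 2 + 2) = 0 := by linear_combination hN + 2 * h
      have h3 : s = 0 := (mul_eq_zero.1 h0).resolve_right (by positivity)
      linarith
  have h0 : Real.sin (a * Real.pi - b * Real.pi) = 0 := by
    rw [hsub, hs, hc]; ring
  obtain ⟨k, hk⟩ := Real.sin_eq_zero_iff.1 h0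
  exact ⟨k, mul_right_cancel₀ Real.pi_ne_zero (by rw [hk]; ring)⟩

/-- A real matrix of finite order preserves a positive definite form, obtained by
averaging the standard form over the powers of the matrix. -/
theorem exists_invariant_posDef (A : Matrix (Fin 2) (Fin 2) ℝ) (m : ℕ) (hm : 0 < m)
    (hA : A ^ m = 1) : ∃ Q : Matrix (Fin 2) (Fin 2) ℝ, Q.PosDef ∧ Aᵀ * Q * A = Q := by
  obtain ⟨m, rfl⟩ := Nat.exists_eq_succ_of_ne_zero hm.ne'
  refine ⟨∑ k ∈ Finset.range (m + 1), (A ^ k)ᵀ * A ^ k, ?_, ?_⟩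
  · rw [Finset.sum_range_succ']
    refine Matrix.PosDef.posSemidef_add (Matrix.posSemidef_sum _ fun k _ => ?_) ?_
    · simpa using Matrix.posSemidef_conjTranspose_mul_self (A ^ (k + 1))
    · simpa using Matrix.PosDef.one
  · have hstep : ∀ k, Aᵀ * ((A ^ k)ᵀ * A ^ k) * A = (A ^ (k + 1))ᵀ * A ^ (k + 1) := by
      intro k
      simp only [pow_succ, Matrix.transpose_mul, Matrix.mul_assoc]
    rw [Finset.mul_sum, Finset.sum_mul, Finset.sum_congr rfl fun k _ => hstep k,
      Finset.sum_range_succ, Finset.sum_range_succ']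
    simp [show A ^ (m + 1) = 1 from hA]

/-- A matrix in `SL₂(ℝ)` preserving a positive definite form is conjugate in `SL₂(ℝ)` to a
rotation, by the Cholesky factor of the form scaled to determinant one. -/
theorem exists_conj_rotSL (A : Matrix.SpecialLinearGroup (Fin 2) ℝ)
    (Q : Matrix (Fin 2) (Fin 2) ℝ) (hQ : Q.PosDef)
    (hAQ : (A : Matrix (Fin 2) (Fin 2) ℝ)ᵀ * Q * A = Q) :
    ∃ t : ℝ, IsConj (rotSL t) A := by
  have hdet := hQ.det_pos
  have hp : 0 < Q 0 0 := hQ.diag_pos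
  have hsymm : Q 1 0 = Q 0 1 := by simpa using hQ.isHermitian.apply 0 1
  rw [Matrix.det_fin_two, hsymm] at hdet
  obtain ⟨D, hD, hD2⟩ : ∃ D : ℝ, 0 < D ∧ D ^ 2 = Q 0 0 * Q 1 1 - Q 0 1 * Q 0 1 :=
    ⟨√_, Real.sqrt_pos.2 hdet, Real.sq_sqrt hdet.le⟩
  obtain ⟨w, hw, hw2⟩ : ∃ w : ℝ, 0 < w ∧ w ^ 2 = Q 0 0 * D :=
    ⟨√_, Real.sqrt_pos.2 (mul_pos hp hD), Real.sq_sqrt (mul_pos hp hD).le⟩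
  -- The Cholesky factor: `gᵀ * g = D⁻¹ • Q`, where `D ^ 2 = det Q`.
  let g : Matrix.SpecialLinearGroup (Fin 2) ℝ := ⟨!![Q 0 0 / w, Q 0 1 / w; 0, D / w], by
    rw [Matrix.det_fin_two_of]; field_simp; linarith⟩
  have hgg : (g : Matrix (Fin 2) (Fin 2) ℝ)ᵀ * g = D⁻¹ • Q := by
    ext i j
    fin_cases i <;> fin_cases j <;>
      simp [g, Matrix.mul_apply, Fin.sum_univ_two, hsymm] <;> field_simp <;> rw [hw2]
    all_goals first | ring1 | linear_combination D * hD2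
  let R := g * A * g⁻¹
  have hRg : (R : Matrix (Fin 2) (Fin 2) ℝ) * g = g * A := by
    rw [← Matrix.SpecialLinearGroup.coe_mul, ← Matrix.SpecialLinearGroup.coe_mul]
    simp [R]
  have hginv : (g : Matrix (Fin 2) (Fin 2) ℝ) * (g⁻¹ : Matrix.SpecialLinearGroup (Fin 2) ℝ) = 1 := by
    rw [← Matrix.SpecialLinearGroup.coe_mul]; simp
  have hR : (R : Matrix (Fin 2) (Fin 2) ℝ)ᵀ * R = 1 := by
    set G : Matrix (Fin 2) (Fin 2) ℝ := (g : Matrix (Fin 2) (Fin 2) ℝ)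
    set G' : Matrix (Fin 2) (Fin 2) ℝ :=
      ((g⁻¹ : Matrix.SpecialLinearGroup (Fin 2) ℝ) : Matrix (Fin 2) (Fin 2) ℝ)
    set M : Matrix (Fin 2) (Fin 2) ℝ := (R : Matrix (Fin 2) (Fin 2) ℝ)
    have h1 : Gᵀ * (Mᵀ * M) * G = Gᵀ * G := by
      calc Gᵀ * (Mᵀ * M) * G = (M * G)ᵀ * (M * G) := by
            simp only [Matrix.transpose_mul, Matrix.mul_assoc]
        _ = (A : Matrix (Fin 2) (Fin 2) ℝ)ᵀ * (Gᵀ * G) * A := by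
            rw [hRg]; simp only [Matrix.transpose_mul, Matrix.mul_assoc]
        _ = Gᵀ * G := by
            rw [hgg, Matrix.mul_smul, Matrix.smul_mul, hAQ]
    have hginv' : G'ᵀ * Gᵀ = 1 := by rw [← Matrix.transpose_mul, hginv, Matrix.transpose_one]
    calc Mᵀ * M = (G'ᵀ * Gᵀ) * (Mᵀ * M) * (G * G') := by rw [hginv, hginv']; simp
      _ = G'ᵀ * (Gᵀ * (Mᵀ * M) * G) * G' := by simp only [Matrix.mul_assoc]
      _ = (G'ᵀ * Gᵀ) * (G * G') := by rw [h1]; simp only [Matrix.mul_assoc]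
      _ = 1 := by rw [hginv, hginv']; simp
  have hRdet := R.det_coe
  rw [Matrix.det_fin_two] at hRdet
  have e00 := congrFun (congrFun hR 0) 0
  have e01 := congrFun (congrFun hR 0) 1
  have e11 := congrFun (congrFun hR 1) 1
  simp only [Matrix.mul_apply, Matrix.transpose_apply, Fin.sum_univ_two, Matrix.one_apply_eq] at e00 e11
  simp only [Matrix.mul_apply, Matrix.transpose_apply, Fin.sum_univ_two] at e01
  rw [Matrix.one_apply_ne (by decide)] at e01
  have f11 : R 1 1 = R 0 0 := by
    linear_combination R 0 0 * hRdet - R 1 1 * e00 + R 1 0 * e01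
  have f01 : R 0 1 = - R 1 0 := by
    linear_combination R 0 0 * e01 - R 1 0 * hRdet - R 0 1 * e00
  obtain ⟨θ, hθ⟩ := (Complex.norm_eq_one_iff ⟨R 0 0, R 1 0⟩).1 (by
    rw [Complex.norm_def, Complex.normSq_mk, e00, Real.sqrt_one])
  have hre : Real.cos θ = R 0 0 := by
    have := congrArg Complex.re hθ
    rwa [Complex.exp_ofReal_mul_I_re] at this
  have him : Real.sin θ = R 1 0 := by
    have := congrArg Complex.im hθ
    rwa [Complex.exp_ofReal_mul_I_im] at this
  have hrot : rotSL (θ / Real.pi) = R := by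
    ext i j
    fin_cases i <;> fin_cases j <;>
      simp [rotSL, div_mul_cancel₀ _ Real.pi_ne_zero, hre, him, f11, f01]
  exact ⟨θ / Real.pi, hrot ▸ (isConj_iff.2 ⟨g, rfl⟩ : IsConj A R).symm⟩

theorem exists_rat_isConj (x : PSL(2, ℝ)) (hx : IsOfFinOrder x) :
    ∃ q : ℚ, IsConj (rotPSL q) x := by
  obtain ⟨n, hn, hxn⟩ := isOfFinOrder_iff_pow_eq_one.1 hx
  obtain ⟨A, rfl⟩ := QuotientGroup.mk_surjective x
  obtain ⟨r, hr, hA⟩ := (mk_eq_one_iff (A ^ n)).1 (by rw [QuotientGroup.mk_pow]; exact hxn)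
  -- `A ^ n = ±1`, so the exponent is doubled to get the identity in `SL₂(ℝ)`.
  have hA2 : (A : Matrix (Fin 2) (Fin 2) ℝ) ^ (n * 2) = 1 := by
    rw [pow_mul, ← Matrix.SpecialLinearGroup.coe_pow, hA, pow_two]
    ext i j
    fin_cases i <;> fin_cases j <;> simp [Matrix.mul_apply, Fin.sum_univ_two, ← pow_two, hr]
  obtain ⟨Q, hQ, hAQ⟩ := exists_invariant_posDef _ (n * 2) (by positivity) hA2
  obtain ⟨t, ht⟩ := exists_conj_rotSL A Q hQ hAQ
  have hconj : IsConj (rotPSL t) (QuotientGroup.mk A : PSL(2, ℝ)) :=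
    (QuotientGroup.mk' _).map_isConj ht
  have htn : rotPSL t ^ n = 1 := by
    have h := hconj.pow n
    rw [hxn] at h
    exact isConj_one_left.1 h
  obtain ⟨k, hk⟩ := (rotPSL_eq_one_iff (((n : ℤ) : ℝ) * t)).1 (by
    rw [rotPSL_zsmul, zpow_natCast, htn])
  have hn' : (n : ℝ) ≠ 0 := by positivity
  refine ⟨(k : ℚ) / n, ?_⟩
  have : (((k : ℚ) / n : ℚ) : ℝ) = t := by
    push_cast
    rw [hk]
    push_cast
    field_simp
  rwa [this]

/-- The map `ℚ/ℤ → PSL₂(ℝ)^Tor/~`, `a ↦ C_a` (the conjugacy class of `σ_a`), is a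
well-defined bijection, and for every integer `n` and `a ∈ ℚ/ℤ` one has `n·a = 0` iff
`C_a^n = {1}`. Stated on representatives: well-definedness, injectivity, surjectivity
onto conjugacy classes of elements of finite order, and the torsion statement
(`C_a^n` is the conjugacy class of `σ_a^n`, so `C_a^n = {1} ↔ σ_a^n = 1`). -/
theorem rotPSL_conjClasses_bijective :
    (∀ a a' : ℝ, (a : AddCircle (1 : ℝ)) = (a' : AddCircle (1 : ℝ)) →
      IsConj (rotPSL a) (rotPSL a')) ∧
    (∀ q q' : ℚ, IsConj (rotPSL q) (rotPSL q') →
      (q : AddCircle (1 : ℚ)) = (q' : AddCircle (1 : ℚ))) ∧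
    (∀ x : PSL(2, ℝ), IsOfFinOrder x → ∃ q : ℚ, IsConj (rotPSL q) x) ∧
    (∀ (n : ℤ) (q : ℚ), n • (q : AddCircle (1 : ℚ)) = 0 ↔ rotPSL q ^ n = 1) := by
  refine ⟨fun a a' h => ?_, fun q q' h => ?_, exists_rat_isConj, fun n q => ?_⟩
  · obtain ⟨k, hk⟩ := AddSubgroup.mem_zmultiples_iff.1 ((QuotientAddGroup.eq_iff_sub_mem).1 h)
    rw [rotPSL_eq_of_sub (k := k) (by simpa using hk)]
  · obtain ⟨k, hk⟩ := exists_int_of_isConj h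
    refine (QuotientAddGroup.eq_iff_sub_mem).2 (AddSubgroup.mem_zmultiples_iff.2 ⟨k, ?_⟩)
    have : (k : ℚ) = q - q' := by exact_mod_cast hk
    simpa using this
  · rw [← rotPSL_zsmul, rotPSL_eq_one_iff, ← AddCircle.coe_zsmul, AddCircle.coe_eq_zero_iff]
    refine exists_congr fun k => ?_
    simp only [zsmul_eq_mul, mul_one]
    norm_cast
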